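/- Let Q ⊂ ℝ² be a square of area A > 0 and fix v_max > 0, u_max > 0. For each m ≥ 1 define the optimal light-load coverage cost of m double-integrator robots as T_opt^DI(m) = inf over all configurations g₁,…,g_m ∈ ℝ² × ℝ² with ‖v_i‖ ≤ v_max of (1/A)∫_Q min_{1≤i≤m} τ_DI(g_i, q) dq. Then liminf_{m→∞} m^{1/3} · T_opt^DI(m) ≥ (1/24) (A / (2 v_max u_max))^{1/3}. -/

import Mathlib

open MeasureTheory Filter Topology Real

noncomputable section

/-- The plane `ℝ²` with the Euclidean norm. -/
abbrev Plane : Type := EuclideanSpace ℝ (Fin 2)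

/-- A double-integrator (DI) trajectory with speed bound `vmax` and acceleration bound
`umax`: a twice continuously differentiable curve in the plane whose velocity and
acceleration are bounded by `vmax` and `umax` respectively. -/
def IsDITraj (vmax umax : ℝ) (x : ℝ → Plane) : Prop :=
  ContDiff ℝ 2 x ∧ (∀ t, ‖deriv x t‖ ≤ vmax) ∧ (∀ t, ‖deriv (deriv x) t‖ ≤ umax)

/-- Minimum travel time of a DI robot from configuration `(p, v)` to the point `q`. -/
def tauDI (vmax umax : ℝ) (p v q : Plane) : ℝ :=
  sInf {T : ℝ | 0 ≤ T ∧ ∃ x : ℝ → Plane, IsDITraj vmax umax x ∧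
    x 0 = p ∧ deriv x 0 = v ∧ x T = q}

/-- Reachable set at time `t` of a DI robot starting at configuration `(p, v)`. -/
def reachDI (vmax umax : ℝ) (p v : Plane) (t : ℝ) : Set Plane :=
  {q | tauDI vmax umax p v q ≤ t}

/-!
At time `T` a robot parked at `(p, v)` is within `umax * T ^ 2` of `p + T • v`, so the points it can
reach before time `t` lie in a tube of length `vmax * t` and width of order `umax * t ^ 2`, whose
area is at most `8 * π * umax * vmax * t ^ 3`. If `m` such tubes cover at most half of the region,
the average travel time is at least `t / 2` by Markov's inequality, and this allows `t` to be of
order `m ^ (-1 / 3)`.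

Two facts keep the statement from being about junk values. The travel time is integrable: its
sublevel sets are unions of convex sets with nonempty interior, and such a union differs from the
union of the interiors by a porous, hence null, set. The real-valued `liminf` is genuine because the
sequence is bounded along the cubes `m = n ^ 3`: robots on an `n × n ^ 2` grid, moving along the
first axis and deviating laterally by order `T ^ 2` in time `T`, reach every point in time of order
`1 / n`.
-/

section NormedSpace

variable {E : Type*} [NormedAddCommGroup E] [NormedSpace ℝ E]

theorem norm_sub_add_smul_deriv_le {x : ℝ → E} {u : ℝ} (hx : Differentiable ℝ x)
    (hx' : Differentiable ℝ (deriv x)) (hu : ∀ t, ‖deriv (deriv x) t‖ ≤ u) (a b : ℝ) :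
    ‖x b - (x a + (b - a) • deriv x a)‖ ≤ u * (b - a) ^ 2 := by
  have hu0 : 0 ≤ u := (norm_nonneg _).trans (hu 0)
  have hderiv_sub : ∀ s ∈ Set.uIcc a b, ‖deriv x s - deriv x a‖ ≤ u * |b - a| := fun s hs ↦
    calc ‖deriv x s - deriv x a‖ ≤ u * |s - a| :=
          convex_univ.norm_image_sub_le_of_norm_deriv_le (fun t _ ↦ hx' t) (fun t _ ↦ hu t)
            (Set.mem_univ a) (Set.mem_univ s)
      _ ≤ u * |b - a| := by gcongr u * ?_; exact Set.abs_sub_left_of_mem_uIcc hs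
  have hdrift : ∀ s, HasDerivAt (fun t ↦ x t - t • deriv x a) (deriv x s - deriv x a) s :=
    fun s ↦ by simpa using (hx s).hasDerivAt.fun_sub ((hasDerivAt_id s).smul_const (deriv x a))
  calc ‖x b - (x a + (b - a) • deriv x a)‖
      = ‖(x b - b • deriv x a) - (x a - a • deriv x a)‖ := by congr 1; module
    _ ≤ u * |b - a| * |b - a| :=
        (convex_uIcc a b).norm_image_sub_le_of_norm_hasDerivWithin_le
          (fun s _ ↦ (hdrift s).hasDerivWithinAt) hderiv_sub Set.left_mem_uIcc Set.right_mem_uIcc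
    _ = u * (b - a) ^ 2 := by rw [mul_assoc, abs_mul_abs_self, sq]

open scoped Pointwise in
theorem exists_norm_le_smul_eq {z : E} {c r : ℝ} (hc : 0 ≤ c) (hr : 0 ≤ r) (hz : ‖z‖ ≤ c * r) :
    ∃ w : E, ‖w‖ ≤ r ∧ c • w = z := by
  have hmem : z ∈ c • Metric.closedBall (0 : E) r := by
    rwa [smul_closedBall _ _ hr, smul_zero, mem_closedBall_zero_iff, Real.norm_of_nonneg hc]
  simpa only [Set.mem_smul_set, mem_closedBall_zero_iff] using hmem

theorem exists_fin_sub_mul_mem_Ico {n : ℕ} {h x : ℝ} (hx : x ∈ Set.Ico 0 (n * h)) :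
    ∃ i : Fin n, x - i * h ∈ Set.Ico 0 h := by
  have hh : 0 < h := pos_of_mul_pos_right (hx.1.trans_lt hx.2) n.cast_nonneg
  have hfloor : ⌊x / h⌋₊ < n := (Nat.floor_lt (div_nonneg hx.1 hh.le)).2 ((div_lt_iff₀ hh).2 hx.2)
  refine ⟨⟨⌊x / h⌋₊, hfloor⟩, sub_nonneg.2 ?_, sub_lt_iff_lt_add'.2 ?_⟩
  · exact (le_div_iff₀ hh).1 (Nat.floor_le (div_nonneg hx.1 hh.le))
  · simpa only [add_mul, one_mul] using (div_lt_iff₀ hh).1 (Nat.lt_floor_add_one (x / h))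

theorem iUnion_closedBall_add_smul_subset {p v : E} {t r : ℝ} {N : ℕ} (hN : N ≠ 0)
    (hv : ‖v‖ * t ≤ N * r) :
    ⋃ T ∈ Set.Ico 0 t, Metric.closedBall (p + T • v) r ⊆
      ⋃ j : Fin N, Metric.closedBall (p + (j * (t / N)) • v) (2 * r) := by
  have hN' : (0 : ℝ) < N := by positivity
  refine Set.iUnion₂_subset fun T hT ↦ ?_
  obtain ⟨j, hj⟩ : ∃ j : Fin N, T - j * (t / N) ∈ Set.Ico 0 (t / N) :=
    exists_fin_sub_mul_mem_Ico (by rwa [mul_div_cancel₀ _ hN'.ne'])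
  refine Set.subset_iUnion_of_subset j (Metric.closedBall_subset_closedBall' ?_)
  have hdist : dist (p + T • v) (p + (j * (t / N)) • v) ≤ r :=
    calc dist (p + T • v) (p + (j * (t / N)) • v) = (T - j * (t / N)) * ‖v‖ := by
          rw [dist_add_left, dist_eq_norm, ← sub_smul, norm_smul_of_nonneg hj.1]
      _ ≤ t / N * ‖v‖ := by gcongr; exact hj.2.le
      _ ≤ r := by rw [div_mul_eq_mul_div, div_le_iff₀ hN']; linarith
  linarith

theorem exists_eventually_closedBall_subset_inter_interior {C : Set E} (hC : Convex ℝ C)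
    (hint : (interior C).Nonempty) {q : E} (hq : q ∈ C) :
    ∃ κ > 0, ∀ᶠ r in 𝓝[>] (0 : ℝ), ∃ y,
      Metric.closedBall y (κ * r) ⊆ Metric.closedBall q r ∩ interior C := by
  obtain ⟨c, hc⟩ := hint
  obtain ⟨ρ, hρ, hball⟩ := Metric.nhds_basis_closedBall.mem_iff.1 (isOpen_interior.mem_nhds hc)
  have hD : 0 < ‖c - q‖ + ρ := by positivity
  refine ⟨ρ / (‖c - q‖ + ρ), by positivity, ?_⟩
  filter_upwards [Ioc_mem_nhdsGT hD] with r hr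
  have hs : r / (‖c - q‖ + ρ) ∈ Set.Ioc (0 : ℝ) 1 := ⟨div_pos hr.1 hD, (div_le_one hD).2 hr.2⟩
  have hrs : r = r / (‖c - q‖ + ρ) * (‖c - q‖ + ρ) := (div_mul_cancel₀ _ hD.ne').symm
  generalize r / (‖c - q‖ + ρ) = s at hs hrs
  refine ⟨q + s • (c - q), fun z hz ↦ ?_⟩
  obtain ⟨w, hw, hwz⟩ : ∃ w, ‖w‖ ≤ ρ ∧ s • w = z - (q + s • (c - q)) := by
    refine exists_norm_le_smul_eq hs.1.le hρ.le ((mem_closedBall_iff_norm.1 hz).trans_eq ?_)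
    rw [hrs]; field_simp
  obtain rfl : z = q + s • (c - q + w) := by rw [smul_add, hwz]; abel
  refine ⟨?_, hC.add_smul_mem_interior hq (hball ?_) hs⟩
  · rw [mem_closedBall_iff_norm, add_sub_cancel_left, norm_smul_of_nonneg hs.1.le, hrs]
    exact mul_le_mul_of_nonneg_left ((norm_add_le _ _).trans (by linarith)) hs.1.le
  · rwa [mem_closedBall_iff_norm, show q + (c - q + w) - c = w by abel]

end NormedSpace

section Measure

variable {E : Type*} [NormedAddCommGroup E] [NormedSpace ℝ E] [FiniteDimensional ℝ E]
  [MeasurableSpace E] [BorelSpace E] (μ : Measure E) [μ.IsAddHaarMeasure]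

theorem addHaar_eq_zero_of_porous {S : Set E}
    (hS : ∀ q ∈ S, ∃ κ > 0, ∀ᶠ r in 𝓝[>] (0 : ℝ), ∃ y,
      Metric.closedBall y (κ * r) ⊆ Metric.closedBall q r \ S) :
    μ S = 0 := by
  have : ProperSpace E := FiniteDimensional.proper ℝ E
  rw [← Measure.restrict_apply_self]
  refine measure_mono_null ?_ (ae_iff.1 (Besicovitch.ae_tendsto_measure_inter_div μ S))
  intro q hq hlim
  obtain ⟨κ, hκ, hev⟩ := hS q hq
  have hratio : ∀ᶠ r in 𝓝[>] (0 : ℝ), μ (S ∩ Metric.closedBall q r) / μ (Metric.closedBall q r) ≤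
      1 - ENNReal.ofReal (κ ^ Module.finrank ℝ E) := by
    filter_upwards [hev] with r ⟨y, hy⟩
    have htop {z : E} {R : ℝ} : μ (Metric.closedBall z R) ≠ ⊤ := measure_closedBall_lt_top.ne
    have hhole : μ (Metric.closedBall y (κ * r)) =
        ENNReal.ofReal (κ ^ Module.finrank ℝ E) * μ (Metric.closedBall q r) := by
      rw [Measure.addHaar_closedBall_mul_of_pos μ y hκ, ← Measure.addHaar_closedBall_center μ q]
    refine ENNReal.div_le_of_le_mul ?_
    calc μ (S ∩ Metric.closedBall q r)
        ≤ μ (Metric.closedBall q r \ Metric.closedBall y (κ * r)) :=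
          measure_mono fun z hz ↦ ⟨hz.2, fun hzy ↦ (hy hzy).2 hz.1⟩
      _ = μ (Metric.closedBall q r) - μ (Metric.closedBall y (κ * r)) :=
          measure_sdiff (hy.trans Set.sdiff_subset) measurableSet_closedBall.nullMeasurableSet htop
      _ = (1 - ENNReal.ofReal (κ ^ Module.finrank ℝ E)) * μ (Metric.closedBall q r) := by
          rw [hhole, ENNReal.sub_mul fun _ _ ↦ htop, one_mul]
  refine (ENNReal.sub_lt_self ENNReal.one_ne_top one_ne_zero ?_).not_ge (le_of_tendsto hlim hratio)
  exact (ENNReal.ofReal_pos.2 (by positivity)).ne'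

theorem nullMeasurableSet_iUnion_of_convex {ι : Type*} {C : ι → Set E}
    (hC : ∀ i, Convex ℝ (C i)) (hint : ∀ i, (interior (C i)).Nonempty) :
    NullMeasurableSet (⋃ i, C i) μ := by
  have hnull : μ ((⋃ i, C i) \ ⋃ i, interior (C i)) = 0 := by
    refine addHaar_eq_zero_of_porous μ fun q hq ↦ ?_
    obtain ⟨i, hqi⟩ := Set.mem_iUnion.1 hq.1
    obtain ⟨κ, hκ, hev⟩ := exists_eventually_closedBall_subset_inter_interior (hC i) (hint i) hqi
    refine ⟨κ, hκ, hev.mono fun r ⟨y, hy⟩ ↦ ⟨y, fun z hz ↦ ⟨(hy hz).1, fun hzS ↦ hzS.2 ?_⟩⟩⟩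
    exact Set.mem_iUnion_of_mem i (hy hz).2
  rw [← Set.union_sdiff_cancel (Set.iUnion_mono fun i ↦ interior_subset (s := C i))]
  exact (isOpen_iUnion fun _ ↦ isOpen_interior).measurableSet.nullMeasurableSet.union_null hnull

end Measure

theorem half_mul_measureReal_univ_le_integral {α : Type*} [MeasurableSpace α] {μ : Measure α}
    [IsFiniteMeasure μ] {f : α → ℝ} {t : ℝ} (hf0 : 0 ≤ᵐ[μ] f) (hf : Integrable f μ) (ht : 0 ≤ t)
    (hlt : μ.real {x | f x < t} ≤ μ.real Set.univ / 2) :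
    t / 2 * μ.real Set.univ ≤ ∫ x, f x ∂μ := by
  have hsplit : μ.real Set.univ ≤ μ.real {x | f x < t} + μ.real {x | t ≤ f x} :=
    (measureReal_mono fun x _ ↦ lt_or_ge (f x) t).trans (measureReal_union_le _ _)
  calc t / 2 * μ.real Set.univ = t * (μ.real Set.univ / 2) := by ring
    _ ≤ t * μ.real {x | t ≤ f x} := by gcongr; linarith
    _ ≤ ∫ x, f x ∂μ := mul_meas_ge_le_integral_of_nonneg hf0 hf t

theorem volume_iUnion_closedBall_add_smul_le {p v : Plane} {t r L : ℝ} (hr : 0 < r) (hrL : r ≤ L)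
    (hv : ‖v‖ * t ≤ L) :
    volume (⋃ T ∈ Set.Ico 0 t, Metric.closedBall (p + T • v) r) ≤
      ENNReal.ofReal (8 * π * L * r) := by
  have hone : 1 ≤ L / r := (one_le_div hr).2 hrL
  have hle : L / r ≤ ⌈L / r⌉₊ := Nat.le_ceil _
  have hlt : ⌈L / r⌉₊ < L / r + 1 := Nat.ceil_lt_add_one (by positivity)
  have hN : ⌈L / r⌉₊ ≠ 0 := (Nat.ceil_pos.2 (by positivity)).ne'
  calc volume (⋃ T ∈ Set.Ico 0 t, Metric.closedBall (p + T • v) r)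
      ≤ volume (⋃ j : Fin ⌈L / r⌉₊, Metric.closedBall (p + (j * (t / ⌈L / r⌉₊)) • v) (2 * r)) :=
        measure_mono (iUnion_closedBall_add_smul_subset hN (hv.trans ((div_le_iff₀ hr).1 hle)))
    _ ≤ ∑ j : Fin ⌈L / r⌉₊, volume (Metric.closedBall (p + (j * (t / ⌈L / r⌉₊)) • v) (2 * r)) :=
        measure_iUnion_fintype_le _ _
    _ = ENNReal.ofReal (⌈L / r⌉₊ * ((2 * r) ^ 2 * π)) := by
        simp only [EuclideanSpace.volume_closedBall_fin_two, Finset.sum_const, Finset.card_univ,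
          Fintype.card_fin, nsmul_eq_mul]
        rw [← ENNReal.ofReal_pow (by positivity), ← ENNReal.ofReal_mul (by positivity),
          ← ENNReal.ofReal_natCast, ← ENNReal.ofReal_mul (by positivity)]
    _ ≤ ENNReal.ofReal (2 * (L / r) * ((2 * r) ^ 2 * π)) := by gcongr; linarith
    _ = ENNReal.ofReal (8 * π * L * r) := by congr 1; field_simp; ring

theorem aemeasurable_of_nullMeasurableSet_lt {α : Type*} [MeasurableSpace α] {μ : Measure α}
    {f : α → ℝ} (hf : ∀ t, NullMeasurableSet {x | f x < t} μ) : AEMeasurable f μ := by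
  have hmeas : Measurable[NullMeasurableSpace.instMeasurableSpace (μ := μ)] f :=
    measurable_of_Iio hf
  exact NullMeasurable.aemeasurable fun s hs ↦ hmeas hs

section Trajectories

variable {vmax umax : ℝ} {p v : Plane}

namespace IsDITraj

variable {x y : ℝ → Plane}

theorem differentiable (hx : IsDITraj vmax umax x) : Differentiable ℝ x :=
  hx.1.differentiable two_ne_zero

theorem differentiable_deriv (hx : IsDITraj vmax umax x) : Differentiable ℝ (deriv x) :=
  hx.1.differentiable_deriv_two

theorem convexComb (hx : IsDITraj vmax umax x) (hy : IsDITraj vmax umax y) {a b : ℝ}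
    (ha : 0 ≤ a) (hb : 0 ≤ b) (hab : a + b = 1) : IsDITraj vmax umax (a • x + b • y) := by
  have hball {c : ℝ} {z w : Plane} (hz : ‖z‖ ≤ c) (hw : ‖w‖ ≤ c) : ‖a • z + b • w‖ ≤ c := by
    rw [← mem_closedBall_zero_iff] at *
    exact convex_closedBall 0 c hz hw ha hb hab
  have hderiv : deriv (a • x + b • y) = a • deriv x + b • deriv y := by
    ext1 t
    exact (((hx.differentiable t).hasDerivAt.const_smul a).add
      ((hy.differentiable t).hasDerivAt.const_smul b)).deriv
  have hderiv₂ : deriv (a • deriv x + b • deriv y) =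
      a • deriv (deriv x) + b • deriv (deriv y) := by
    ext1 t
    exact (((hx.differentiable_deriv t).hasDerivAt.const_smul a).add
      ((hy.differentiable_deriv t).hasDerivAt.const_smul b)).deriv
  refine ⟨(hx.1.const_smul a).add (hy.1.const_smul b), fun t ↦ ?_, fun t ↦ ?_⟩
  · rw [hderiv]; exact hball (hx.2.1 t) (hy.2.1 t)
  · rw [hderiv, hderiv₂]; exact hball (hx.2.2 t) (hy.2.2 t)

end IsDITraj

/-- The points that a DI robot starting at configuration `(p, v)` can occupy at time exactly `T`,
so that `tauDI` is the infimum of the `T ≥ 0` with `q ∈ exactReachDI vmax umax p v T`. -/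
def exactReachDI (vmax umax : ℝ) (p v : Plane) (T : ℝ) : Set Plane :=
  {q | ∃ x : ℝ → Plane, IsDITraj vmax umax x ∧ x 0 = p ∧ deriv x 0 = v ∧ x T = q}

theorem convex_exactReachDI (T : ℝ) : Convex ℝ (exactReachDI vmax umax p v T) := by
  rintro _ ⟨x, hx, hx0, hx0', rfl⟩ _ ⟨y, hy, hy0, hy0', rfl⟩ a b ha hb hab
  refine ⟨a • x + b • y, hx.convexComb hy ha hb hab, ?_, ?_, rfl⟩
  · rw [Pi.add_apply, Pi.smul_apply, Pi.smul_apply, hx0, hy0, Convex.combo_self hab]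
  · rw [(((hx.differentiable 0).hasDerivAt.const_smul a).add
      ((hy.differentiable 0).hasDerivAt.const_smul b)).deriv, hx0', hy0', Convex.combo_self hab]

theorem exactReachDI_zero_subset : exactReachDI vmax umax p v 0 ⊆ {p} := by
  rintro _ ⟨x, -, hx0, -, rfl⟩
  exact hx0

theorem exactReachDI_subset_closedBall (T : ℝ) :
    exactReachDI vmax umax p v T ⊆ Metric.closedBall (p + T • v) (umax * T ^ 2) := by
  rintro _ ⟨x, hx, rfl, rfl, rfl⟩
  simpa [dist_eq_norm] using
    norm_sub_add_smul_deriv_le hx.differentiable hx.differentiable_deriv hx.2.2 0 T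

theorem add_smul_add_smul_mem_exactReachDI {w : Plane} {g : ℝ → ℝ} (hg : ContDiff ℝ 2 g)
    (hg0 : g 0 = 0) (hg0' : deriv g 0 = 0) (hspeed : ∀ t, ‖v + deriv g t • w‖ ≤ vmax)
    (haccel : ∀ t, ‖deriv (deriv g) t • w‖ ≤ umax) (T : ℝ) :
    p + T • v + g T • w ∈ exactReachDI vmax umax p v T := by
  have hderiv : deriv (fun t : ℝ ↦ p + t • v + g t • w) = fun t ↦ v + deriv g t • w := by
    ext1 t
    simpa using ((((hasDerivAt_id t).smul_const v).const_add p).fun_add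
      ((hg.differentiable two_ne_zero t).hasDerivAt.smul_const w)).deriv
  have hderiv₂ : deriv (fun t ↦ v + deriv g t • w) = fun t ↦ deriv (deriv g) t • w := by
    ext1 t
    exact (((hg.differentiable_deriv_two t).hasDerivAt.smul_const w).const_add v).deriv
  refine ⟨fun t ↦ p + t • v + g t • w, ⟨by fun_prop, ?_, ?_⟩, ?_, ?_, rfl⟩
  · rwa [hderiv]
  · rwa [hderiv, hderiv₂]
  · simp [hg0]
  · simp [hderiv, hg0']

end Trajectories

section Steering

variable {k : ℝ}

/-- Displacement profile that steers from one velocity to another with acceleration of order `k`.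
Trajectories are defined on all of `ℝ` and must obey the speed bound at negative times too, so its
derivative has to stay in `[0, 1]` on both sides of `0`; this rules out `k * t ^ 2`. -/
def steer (k t : ℝ) : ℝ := t - arctan (k * t) / k

@[simp]
theorem steer_zero (k : ℝ) : steer k 0 = 0 := by simp [steer]

theorem contDiff_steer (k : ℝ) : ContDiff ℝ 2 (steer k) :=
  contDiff_id.sub ((contDiff_arctan.comp (contDiff_const.mul contDiff_id)).div_const k)

theorem deriv_steer (hk : k ≠ 0) : deriv (steer k) = fun t ↦ 1 - 1 / (1 + (k * t) ^ 2) := by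
  ext1 t
  have h := (hasDerivAt_id t).sub
    (((hasDerivAt_arctan (k * t)).comp t ((hasDerivAt_id t).const_mul k)).div_const k)
  refine h.deriv.trans ?_
  field_simp

theorem deriv_deriv_steer (hk : k ≠ 0) :
    deriv (deriv (steer k)) = fun t ↦ 2 * k ^ 2 * t / (1 + (k * t) ^ 2) ^ 2 := by
  ext1 t
  have hden : 1 + (k * t) ^ 2 ≠ 0 := by positivity
  have h := (((((hasDerivAt_id t).const_mul k).fun_pow 2).const_add 1).fun_inv hden).const_sub 1
  simp only [deriv_steer hk, one_div]
  refine h.deriv.trans ?_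
  simp only [id]
  push_cast
  field_simp

theorem deriv_steer_mem_Icc (hk : k ≠ 0) (t : ℝ) : deriv (steer k) t ∈ Set.Icc 0 1 := by
  have hden : 1 ≤ 1 + (k * t) ^ 2 := le_add_of_nonneg_right (sq_nonneg _)
  rw [deriv_steer hk]
  exact ⟨sub_nonneg.2 (div_le_one_of_le₀ hden (by positivity)), sub_le_self _ (by positivity)⟩

theorem abs_deriv_deriv_steer_le (hk : 0 < k) (t : ℝ) : |deriv (deriv (steer k)) t| ≤ k := by
  have hamgm : 2 * |k * t| ≤ (1 + (k * t) ^ 2) ^ 2 := by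
    rw [← sq_abs (k * t)]
    nlinarith [sq_nonneg (|k * t| - 1), sq_nonneg (|k * t| ^ 2)]
  calc |deriv (deriv (steer k)) t| = k * (2 * |k * t|) / (1 + (k * t) ^ 2) ^ 2 := by
        rw [deriv_deriv_steer hk.ne', abs_div,
          abs_of_pos (a := (1 + (k * t) ^ 2) ^ 2) (by positivity),
          show 2 * k ^ 2 * t = k * 2 * (k * t) by ring, abs_mul, abs_of_pos (mul_pos hk two_pos),
          mul_assoc k]
    _ ≤ k := div_le_of_le_mul₀ (by positivity) hk.le (by gcongr)

theorem steer_pos (hk : 0 < k) {t : ℝ} (ht : 0 < t) : 0 < steer k t := by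
  have h := lt_tan (arctan_pos.2 (mul_pos hk ht)) (arctan_lt_pi_div_two _)
  rw [tan_arctan] at h
  exact sub_pos.2 ((div_lt_iff₀' hk).2 h)

theorem steer_le_self (hk : 0 < k) {t : ℝ} (ht : 0 ≤ t) : steer k t ≤ t :=
  sub_le_self t (div_nonneg (arctan_nonneg.2 (by positivity)) hk.le)

theorem sub_le_steer (hk : 0 < k) (t : ℝ) : t - π / 2 / k ≤ steer k t := by
  unfold steer
  gcongr
  exact (arctan_lt_pi_div_two _).le

variable {vmax umax : ℝ} {p v : Plane}

theorem closedBall_steer_subset_exactReachDI (hk : 0 < k) (hku : k * (2 * vmax) ≤ umax)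
    (hv : ‖v‖ ≤ vmax) {T : ℝ} (hT : 0 < T) :
    Metric.closedBall (p + (T - steer k T) • v) (steer k T * vmax) ⊆
      exactReachDI vmax umax p v T := by
  intro q hq
  have hvmax : 0 ≤ vmax := (norm_nonneg v).trans hv
  obtain ⟨w, hw, hwq⟩ := exists_norm_le_smul_eq (steer_pos hk hT).le hvmax
    (mem_closedBall_iff_norm.1 hq)
  obtain rfl : q = p + T • v + steer k T • (w - v) := by
    rw [smul_sub, hwq]; module
  refine add_smul_add_smul_mem_exactReachDI (contDiff_steer k) (steer_zero k)
    (by simp [deriv_steer hk.ne']) (fun t ↦ ?_) (fun t ↦ ?_) T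
  · rw [← mem_closedBall_zero_iff] at *
    exact (convex_closedBall 0 vmax).add_smul_sub_mem hv hw (deriv_steer_mem_Icc hk.ne' t)
  · calc ‖deriv (deriv (steer k)) t • (w - v)‖ ≤ k * (vmax + vmax) := by
          rw [norm_smul]
          exact mul_le_mul (abs_deriv_deriv_steer_le hk t)
            ((norm_sub_le w v).trans (add_le_add hw hv)) (norm_nonneg _) hk.le
      _ ≤ umax := by rwa [← two_mul]

/-- Keeping the speed `c` in reserve gives a radius of order `T ^ 2` as `T → 0`, where the `steer`
profile only gives `T ^ 3`. -/
theorem closedBall_one_sub_cos_subset_exactReachDI {c : ℝ} (hc : 0 ≤ c) (hcv : ‖v‖ + c ≤ vmax)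
    (hcu : c ≤ umax) (T : ℝ) :
    Metric.closedBall (p + T • v) ((1 - cos T) * c) ⊆ exactReachDI vmax umax p v T := by
  intro q hq
  obtain ⟨w, hw, hwq⟩ := exists_norm_le_smul_eq (sub_nonneg.2 (cos_le_one T)) hc
    (mem_closedBall_iff_norm.1 hq)
  obtain rfl : q = p + T • v + (1 - cos T) • w := by rw [hwq]; abel
  have hderiv : deriv (fun t ↦ 1 - cos t) = sin := by ext1 t; simp
  have hle {a : ℝ} (ha : |a| ≤ 1) : ‖a • w‖ ≤ c := by
    rw [norm_smul]
    exact (mul_le_of_le_one_left (norm_nonneg w) ha).trans hw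
  refine add_smul_add_smul_mem_exactReachDI (g := fun t ↦ 1 - cos t) (by fun_prop) (by simp)
    (by simp) (fun t ↦ ?_) (fun t ↦ ?_) T
  · rw [hderiv]
    calc ‖v + sin t • w‖ ≤ ‖v‖ + c :=
          (norm_add_le _ _).trans (by gcongr; exact hle (abs_sin_le_one t))
      _ ≤ vmax := hcv
  · rw [hderiv, Real.deriv_sin]
    exact (hle (abs_cos_le_one t)).trans hcu

theorem interior_exactReachDI_nonempty (hvmax : 0 < vmax) (humax : 0 < umax) (hv : ‖v‖ ≤ vmax)
    {T : ℝ} (hT : 0 < T) : (interior (exactReachDI vmax umax p v T)).Nonempty := by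
  have hk : 0 < umax / (2 * vmax) := by positivity
  exact ⟨_, interior_mono (closedBall_steer_subset_exactReachDI hk
    (div_mul_cancel₀ _ (by positivity)).le hv hT) (Metric.ball_subset_interior_closedBall
      (Metric.mem_ball_self (mul_pos (steer_pos hk hT) hvmax)))⟩

theorem mem_exactReachDI (hvmax : 0 < vmax) (humax : 0 < umax) (hv : ‖v‖ ≤ vmax) (q : Plane) :
    q ∈ exactReachDI vmax umax p v (‖q - p‖ / vmax + 2 * π * vmax / umax) := by
  have hk : 0 < umax / (2 * vmax) := by positivity
  have hT : 0 < ‖q - p‖ / vmax + 2 * π * vmax / umax := by positivity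
  refine closedBall_steer_subset_exactReachDI hk (div_mul_cancel₀ _ (by positivity)).le hv hT ?_
  have hdist : ‖q - p‖ = (‖q - p‖ / vmax + 2 * π * vmax / umax
      - 2 * (π / 2 / (umax / (2 * vmax)))) * vmax := by field_simp; ring
  have hlow := sub_le_steer hk (‖q - p‖ / vmax + 2 * π * vmax / umax)
  have hup := steer_le_self hk hT.le
  generalize ‖q - p‖ / vmax + 2 * π * vmax / umax = T at *
  rw [mem_closedBall_iff_norm]
  calc ‖q - (p + (T - steer (umax / (2 * vmax)) T) • v)‖
      = ‖(q - p) - (T - steer (umax / (2 * vmax)) T) • v‖ := by rw [sub_sub]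
    _ ≤ ‖q - p‖ + (T - steer (umax / (2 * vmax)) T) * vmax := by
        refine (norm_sub_le _ _).trans ?_
        rw [norm_smul_of_nonneg (sub_nonneg.2 hup)]
        gcongr
    _ ≤ steer (umax / (2 * vmax)) T * vmax := by rw [hdist]; nlinarith

end Steering

section TravelTime

variable {vmax umax : ℝ} {p v q : Plane}

theorem tauDI_nonneg (vmax umax : ℝ) (p v q : Plane) : 0 ≤ tauDI vmax umax p v q :=
  Real.sInf_nonneg fun _ hT ↦ hT.1

theorem tauDI_le_of_mem {T : ℝ} (hT : 0 ≤ T) (hq : q ∈ exactReachDI vmax umax p v T) :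
    tauDI vmax umax p v q ≤ T :=
  csInf_le ⟨0, fun _ hS ↦ hS.1⟩ ⟨hT, hq⟩

theorem tauDI_le (hvmax : 0 < vmax) (humax : 0 < umax) (hv : ‖v‖ ≤ vmax) (q : Plane) :
    tauDI vmax umax p v q ≤ ‖q - p‖ / vmax + 2 * π * vmax / umax :=
  tauDI_le_of_mem (by positivity) (mem_exactReachDI hvmax humax hv q)

theorem setOf_tauDI_lt (hvmax : 0 < vmax) (humax : 0 < umax) (hv : ‖v‖ ≤ vmax) (t : ℝ) :
    {q | tauDI vmax umax p v q < t} = ⋃ T ∈ Set.Ico 0 t, exactReachDI vmax umax p v T := by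
  ext q
  simp only [Set.mem_iUnion, exists_prop]
  constructor
  · intro hq
    have hne : {T | 0 ≤ T ∧ q ∈ exactReachDI vmax umax p v T}.Nonempty :=
      ⟨_, by positivity, mem_exactReachDI hvmax humax hv q⟩
    obtain ⟨T, ⟨hT, hqT⟩, hTt⟩ := exists_lt_of_csInf_lt hne hq
    exact ⟨T, ⟨hT, hTt⟩, hqT⟩
  · rintro ⟨T, ⟨hT, hTt⟩, hqT⟩
    exact (tauDI_le_of_mem hT hqT).trans_lt hTt

theorem aemeasurable_tauDI (hvmax : 0 < vmax) (humax : 0 < umax) (hv : ‖v‖ ≤ vmax) :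
    AEMeasurable (tauDI vmax umax p v) := by
  refine aemeasurable_of_nullMeasurableSet_lt fun t ↦ ?_
  rw [setOf_tauDI_lt hvmax humax hv]
  rcases le_or_gt t 0 with ht | ht
  · simp [Set.Ico_eq_empty ht.not_gt]
  · rw [← Set.Ioo_insert_left ht, Set.biUnion_insert, Set.biUnion_eq_iUnion]
    exact (Set.subsingleton_singleton.anti exactReachDI_zero_subset).measurableSet
      |>.nullMeasurableSet.union
      (nullMeasurableSet_iUnion_of_convex volume (fun T ↦ convex_exactReachDI T.1)
        fun T ↦ interior_exactReachDI_nonempty hvmax humax hv T.2.1)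

theorem volume_setOf_tauDI_lt_le (hvmax : 0 < vmax) (humax : 0 < umax) (hv : ‖v‖ ≤ vmax) {t : ℝ}
    (ht : 0 < t) (htu : umax * t ≤ vmax) :
    volume {q | tauDI vmax umax p v q < t} ≤ ENNReal.ofReal (8 * π * (umax * vmax * t ^ 3)) := by
  rw [setOf_tauDI_lt hvmax humax hv]
  calc volume (⋃ T ∈ Set.Ico 0 t, exactReachDI vmax umax p v T)
      ≤ volume (⋃ T ∈ Set.Ico 0 t, Metric.closedBall (p + T • v) (umax * t ^ 2)) := by
        refine measure_mono (Set.iUnion₂_mono fun T hT ↦ (exactReachDI_subset_closedBall T).trans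
          (Metric.closedBall_subset_closedBall ?_))
        gcongr
        exacts [hT.1, hT.2.le]
    _ ≤ ENNReal.ofReal (8 * π * (vmax * t) * (umax * t ^ 2)) :=
        volume_iUnion_closedBall_add_smul_le (by positivity) (by nlinarith) (by gcongr)
    _ = ENNReal.ofReal (8 * π * (umax * vmax * t ^ 3)) := by ring_nf

end TravelTime

/-- The minimum travel time to `q` over a fleet of DI robots parked at the configurations `g i`. -/
def fleetTime {ι : Type*} (vmax umax : ℝ) (g : ι → Plane × Plane) (q : Plane) : ℝ :=
  ⨅ i, tauDI vmax umax (g i).1 (g i).2 q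

/-- The light-load coverage cost of the configurations `g`: the average over `Q` of the travel time
of the nearest robot. -/
def coverageCost {ι : Type*} (vmax umax : ℝ) (Q : Set Plane) (g : ι → Plane × Plane) : ℝ :=
  (1 / volume.real Q) * ∫ q in Q, fleetTime vmax umax g q

/-- The optimal light-load coverage cost of `m` DI robots in the region `Q`, the paper's
`T_opt^DI(m)`. -/
def optCoverageCost (vmax umax : ℝ) (Q : Set Plane) (m : ℕ) : ℝ :=
  sInf {c | ∃ g : Fin m → Plane × Plane, (∀ i, ‖(g i).2‖ ≤ vmax) ∧ c = coverageCost vmax umax Q g}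

section Fleet

variable {ι : Type*} {vmax umax : ℝ} {g : ι → Plane × Plane}

theorem fleetTime_nonneg (vmax umax : ℝ) (g : ι → Plane × Plane) (q : Plane) :
    0 ≤ fleetTime vmax umax g q :=
  Real.iInf_nonneg fun _ ↦ tauDI_nonneg ..

theorem fleetTime_le_tauDI (i : ι) (q : Plane) :
    fleetTime vmax umax g q ≤ tauDI vmax umax (g i).1 (g i).2 q :=
  ciInf_le ⟨0, Set.forall_mem_range.2 fun _ ↦ tauDI_nonneg ..⟩ i

theorem volume_setOf_fleetTime_lt_le [Fintype ι] [Nonempty ι] (hvmax : 0 < vmax)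
    (humax : 0 < umax) (hg : ∀ i, ‖(g i).2‖ ≤ vmax) {t : ℝ} (ht : 0 < t) (htu : umax * t ≤ vmax) :
    volume {q | fleetTime vmax umax g q < t} ≤
      ENNReal.ofReal (Fintype.card ι * (8 * π * (umax * vmax * t ^ 3))) := by
  calc volume {q | fleetTime vmax umax g q < t}
      ≤ volume (⋃ i, {q | tauDI vmax umax (g i).1 (g i).2 q < t}) :=
        measure_mono fun q (hq : ⨅ i, _ < t) ↦ Set.mem_iUnion.2 (exists_lt_of_ciInf_lt hq :)
    _ ≤ ∑ i, volume {q | tauDI vmax umax (g i).1 (g i).2 q < t} := measure_iUnion_fintype_le _ _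
    _ ≤ ∑ _i : ι, ENNReal.ofReal (8 * π * (umax * vmax * t ^ 3)) :=
        Finset.sum_le_sum fun i _ ↦ volume_setOf_tauDI_lt_le hvmax humax (hg i) ht htu
    _ = ENNReal.ofReal (Fintype.card ι * (8 * π * (umax * vmax * t ^ 3))) := by
        rw [Finset.sum_const, Finset.card_univ, nsmul_eq_mul, ← ENNReal.ofReal_natCast,
          ← ENNReal.ofReal_mul (Nat.cast_nonneg _)]

variable {Q : Set Plane}

theorem integrableOn_fleetTime [Countable ι] [Nonempty ι] (hvmax : 0 < vmax) (humax : 0 < umax)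
    (hg : ∀ i, ‖(g i).2‖ ≤ vmax) (hQ : Bornology.IsBounded Q) :
    IntegrableOn (fleetTime vmax umax g) Q := by
  let i : ι := Classical.arbitrary ι
  obtain ⟨R, hR⟩ := hQ.subset_closedBall (g i).1
  refine .mono_set (.of_bound measure_closedBall_lt_top
    (AEMeasurable.iInf fun j ↦ aemeasurable_tauDI hvmax humax (hg j)).restrict.aestronglyMeasurable
    (R / vmax + 2 * π * vmax / umax) ?_) hR
  refine ae_restrict_of_forall_mem measurableSet_closedBall fun q hq ↦ ?_
  rw [Real.norm_of_nonneg (fleetTime_nonneg ..)]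
  refine (fleetTime_le_tauDI i q).trans ((tauDI_le hvmax humax (hg i) q).trans ?_)
  gcongr
  rwa [mem_closedBall_iff_norm] at hq

theorem coverageCost_nonneg (vmax umax : ℝ) (Q : Set Plane) (g : ι → Plane × Plane) :
    0 ≤ coverageCost vmax umax Q g :=
  mul_nonneg (by positivity) (integral_nonneg fun q ↦ fleetTime_nonneg vmax umax g q)

theorem coverageCost_le (hQ : Bornology.IsBounded Q) {c : ℝ} (hc : 0 ≤ c)
    (hg : ∀ q ∈ Q, fleetTime vmax umax g q ≤ c) : coverageCost vmax umax Q g ≤ c := by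
  have hint : ∫ q in Q, fleetTime vmax umax g q ≤ c * volume.real Q :=
    (le_abs_self _).trans (norm_setIntegral_le_of_norm_le_const hQ.measure_lt_top fun q hq ↦
      (Real.norm_of_nonneg (fleetTime_nonneg ..)).trans_le (hg q hq))
  rw [coverageCost, one_div_mul_eq_div]
  exact div_le_of_le_mul₀ measureReal_nonneg hc hint

theorem half_le_coverageCost [Fintype ι] [Nonempty ι] (hvmax : 0 < vmax) (humax : 0 < umax)
    (hQ : Bornology.IsBounded Q) (hQ0 : 0 < volume.real Q) (hg : ∀ i, ‖(g i).2‖ ≤ vmax) {t : ℝ}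
    (ht : 0 < t) (htu : umax * t ≤ vmax)
    (hcard : Fintype.card ι * (8 * π * (umax * vmax * t ^ 3)) ≤ volume.real Q / 2) :
    t / 2 ≤ coverageCost vmax umax Q g := by
  have : IsFiniteMeasure (volume.restrict Q) := isFiniteMeasure_restrict.2 hQ.measure_lt_top.ne
  have hsmall : (volume.restrict Q).real {q | fleetTime vmax umax g q < t} ≤
      (volume.restrict Q).real Set.univ / 2 := by
    rw [measureReal_restrict_apply_univ]
    refine ENNReal.toReal_le_of_le_ofReal (by positivity) ?_
    calc volume.restrict Q {q | fleetTime vmax umax g q < t}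
        ≤ volume {q | fleetTime vmax umax g q < t} := Measure.restrict_apply_le _ _
      _ ≤ ENNReal.ofReal (Fintype.card ι * (8 * π * (umax * vmax * t ^ 3))) :=
          volume_setOf_fleetTime_lt_le hvmax humax hg ht htu
      _ ≤ ENNReal.ofReal (volume.real Q / 2) := ENNReal.ofReal_le_ofReal hcard
  have hmarkov := half_mul_measureReal_univ_le_integral
    (Eventually.of_forall fun q ↦ fleetTime_nonneg vmax umax g q)
    (integrableOn_fleetTime hvmax humax hg hQ) ht.le hsmall
  rw [measureReal_restrict_apply_univ] at hmarkov
  rwa [coverageCost, one_div_mul_eq_div, le_div_iff₀ hQ0]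

theorem half_le_optCoverageCost (hvmax : 0 < vmax) (humax : 0 < umax)
    (hQ : Bornology.IsBounded Q) (hQ0 : 0 < volume.real Q) {m : ℕ} (hm : m ≠ 0) {t : ℝ}
    (ht : 0 < t) (htu : umax * t ≤ vmax)
    (hmt : m * (8 * π * (umax * vmax * t ^ 3)) ≤ volume.real Q / 2) :
    t / 2 ≤ optCoverageCost vmax umax Q m := by
  have : NeZero m := ⟨hm⟩
  rw [optCoverageCost]
  refine le_csInf ?_ ?_
  · exact ⟨_, 0, fun i ↦ by simpa using hvmax.le, rfl⟩
  · rintro _ ⟨g, hg, rfl⟩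
    exact half_le_coverageCost hvmax humax hQ hQ0 hg ht htu (by rwa [Fintype.card_fin])

theorem optCoverageCost_le_coverageCost {m : ℕ} {g : Fin m → Plane × Plane}
    (hg : ∀ i, ‖(g i).2‖ ≤ vmax) :
    optCoverageCost vmax umax Q m ≤ coverageCost vmax umax Q g := by
  refine csInf_le ⟨0, ?_⟩ ⟨g, hg, rfl⟩
  rintro _ ⟨f, -, rfl⟩
  exact coverageCost_nonneg vmax umax Q f

theorem optCoverageCost_card_le [Fintype ι] (hQ : Bornology.IsBounded Q)
    (hg : ∀ i, ‖(g i).2‖ ≤ vmax) {c : ℝ} (hc : 0 ≤ c)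
    (hgc : ∀ q ∈ Q, fleetTime vmax umax g q ≤ c) :
    optCoverageCost vmax umax Q (Fintype.card ι) ≤ c := by
  let e : Fin (Fintype.card ι) ≃ ι := (Fintype.equivFin ι).symm
  have hreindex (q : Plane) : fleetTime vmax umax (g ∘ e) q = fleetTime vmax umax g q :=
    e.iInf_comp (g := fun i ↦ tauDI vmax umax (g i).1 (g i).2 q)
  exact (optCoverageCost_le_coverageCost fun i ↦ hg (e i)).trans
    (coverageCost_le hQ hc fun q hq ↦ (hreindex q).trans_le (hgc q hq))

end Fleet

section Grid

variable {vmax umax : ℝ} {n : ℕ}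

/-- An `n × n²` grid of configurations serving the square `[-r, r)²`. Every robot moves along the
first axis at speed `s`, starting a travel time `τ` before its cell of size `2r/n × 2r/n²`. The
cells are that flat because the height a robot can cover in time `T` is of order `T ^ 2`. -/
def gridFleet (s r τ : ℝ) (n : ℕ) : Fin n × Fin (n ^ 2) → Plane × Plane := fun k ↦
  (!₂[k.1 * (2 * r / n) - r - τ * s, k.2 * (2 * r / n ^ 2) - r], EuclideanSpace.single 0 s)

theorem fleetTime_gridFleet_le {s c r τ : ℝ} (hn : n ≠ 0) (hs : 0 < s) (hc : 0 ≤ c)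
    (hsv : s + c ≤ vmax) (hcu : c ≤ umax) (hτ : 0 ≤ τ)
    (hclimb : 2 * r / n ^ 2 ≤ 2 / π ^ 2 * τ ^ 2 * c) (hπ : τ + 2 * r / n / s ≤ π)
    {q : Plane} (hq : ∀ i, q i ∈ Set.Ico (-r) r) :
    fleetTime vmax umax (gridFleet s r τ n) q ≤ τ + 2 * r / n / s := by
  obtain ⟨i, hi⟩ : ∃ i : Fin n, q 0 + r - i * (2 * r / n) ∈ Set.Ico 0 (2 * r / n) := by
    refine exists_fin_sub_mul_mem_Ico ?_
    rw [mul_div_cancel₀ _ (by positivity)]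
    constructor <;> linarith [(hq 0).1, (hq 0).2]
  obtain ⟨j, hj⟩ : ∃ j : Fin (n ^ 2),
      q 1 + r - j * (2 * r / n ^ 2) ∈ Set.Ico 0 (2 * r / n ^ 2) := by
    refine exists_fin_sub_mul_mem_Ico ?_
    rw [Nat.cast_pow, mul_div_cancel₀ _ (by positivity)]
    constructor <;> linarith [(hq 1).1, (hq 1).2]
  obtain ⟨T, hT⟩ : ∃ T, T = τ + (q 0 + r - i * (2 * r / n)) / s := ⟨_, rfl⟩
  have hτT : τ ≤ T := hT ▸ le_add_of_nonneg_right (div_nonneg hi.1 hs.le)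
  have hTle : T ≤ τ + 2 * r / n / s := by rw [hT]; gcongr; exact hi.2.le
  have hcos : 2 / π ^ 2 * τ ^ 2 ≤ 1 - cos T := by
    have h := cos_le_one_sub_mul_cos_sq (abs_le.2 ⟨by linarith [pi_pos], hTle.trans hπ⟩)
    have hsq : 2 / π ^ 2 * τ ^ 2 ≤ 2 / π ^ 2 * T ^ 2 := by gcongr
    linarith
  have hoffset : q - ((gridFleet s r τ n (i, j)).1 + T • (gridFleet s r τ n (i, j)).2) =
      EuclideanSpace.single 1 (q 1 + r - j * (2 * r / n ^ 2)) := by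
    ext l
    fin_cases l
    · have hTs : T * s = τ * s + (q 0 + r - i * (2 * r / n)) := by
        rw [hT, add_mul, div_mul_cancel₀ _ hs.ne']
      suffices q 0 - (i * (2 * r / n) - r - τ * s + T * s) = 0 by simpa [gridFleet] using this
      rw [hTs]; ring
    · suffices q 1 - (j * (2 * r / n ^ 2) - r) = q 1 + r - j * (2 * r / n ^ 2) by
        simpa [gridFleet] using this
      ring
  refine (fleetTime_le_tauDI (i, j) q).trans ((tauDI_le_of_mem (hτ.trans hτT) ?_).trans hTle)
  refine closedBall_one_sub_cos_subset_exactReachDI hc ?_ hcu T ?_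
  · rwa [gridFleet, PiLp.norm_single, Real.norm_of_nonneg hs.le]
  · rw [mem_closedBall_iff_norm, hoffset, PiLp.norm_single, Real.norm_of_nonneg hj.1]
    exact hj.2.le.trans (hclimb.trans (by gcongr))

theorem exists_eventually_optCoverageCost_pow_three_le (hvmax : 0 < vmax) (humax : 0 < umax)
    {Q : Set Plane} (hQ : Bornology.IsBounded Q) :
    ∃ K, ∀ᶠ n : ℕ in atTop, optCoverageCost vmax umax Q (n ^ 3) ≤ K / n := by
  obtain ⟨r, hr, hQr⟩ := hQ.subset_ball_lt 0 0
  obtain ⟨c, hc, hcv, hcu⟩ : ∃ c > 0, c ≤ vmax / 2 ∧ c ≤ umax :=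
    ⟨min (vmax / 2) umax, by positivity, min_le_left _ _, min_le_right _ _⟩
  refine ⟨π * √(r / c) + 2 * r / (vmax / 2), ?_⟩
  filter_upwards [eventually_ge_atTop 1,
    eventually_ge_atTop ⌈π * √(r / c) + 2 * r / (vmax / 2)⌉₊] with n hn1 hnK
  have hn : n ≠ 0 := Nat.one_le_iff_ne_zero.1 hn1
  have hsum : (π * √(r / c) + 2 * r / (vmax / 2)) / n =
      π * √(r / c) / n + 2 * r / n / (vmax / 2) := by ring
  have hle_one : (π * √(r / c) + 2 * r / (vmax / 2)) / n ≤ 1 :=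
    div_le_one_of_le₀ (Nat.ceil_le.1 hnK) n.cast_nonneg
  have hclimb : 2 * r / n ^ 2 = 2 / π ^ 2 * (π * √(r / c) / n) ^ 2 * c := by
    rw [div_pow, mul_pow, sq_sqrt (by positivity)]
    field_simp
  have hcard : Fintype.card (Fin n × Fin (n ^ 2)) = n ^ 3 := by
    rw [Fintype.card_prod, Fintype.card_fin, Fintype.card_fin, pow_succ' n 2]
  rw [← hcard]
  refine optCoverageCost_card_le (g := gridFleet (vmax / 2) r (π * √(r / c) / n) n) hQ (fun k ↦ ?_)
    (by positivity) fun q hq ↦ ?_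
  · rw [gridFleet, PiLp.norm_single, Real.norm_of_nonneg (by positivity)]
    linarith
  · rw [hsum] at hle_one ⊢
    refine fleetTime_gridFleet_le hn (by positivity) hc.le (by linarith) hcu (by positivity)
      hclimb.le (hle_one.trans (by linarith [pi_gt_three])) fun i ↦ ?_
    have hqi : |q i| < r := (PiLp.norm_apply_le q i).trans_lt (mem_ball_zero_iff.1 (hQr hq))
    exact ⟨(abs_lt.1 hqi).1.le, (abs_lt.1 hqi).2⟩

end Grid

section Asymptotics

theorem rpow_one_third_pow_three {x : ℝ} (hx : 0 ≤ x) : (x ^ ((1 : ℝ) / 3)) ^ 3 = x := by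
  simpa using rpow_inv_natCast_pow hx three_ne_zero

variable {vmax umax : ℝ} {Q : Set Plane}

theorem exists_frequently_rpow_mul_optCoverageCost_le (hvmax : 0 < vmax) (humax : 0 < umax)
    (hQ : Bornology.IsBounded Q) :
    ∃ K, ∃ᶠ m : ℕ in atTop, (m : ℝ) ^ ((1 : ℝ) / 3) * optCoverageCost vmax umax Q m ≤ K := by
  obtain ⟨K, hK⟩ := exists_eventually_optCoverageCost_pow_three_le hvmax humax hQ
  refine ⟨K, (tendsto_pow_atTop three_ne_zero).frequently (Eventually.frequently ?_)⟩
  filter_upwards [hK, eventually_gt_atTop 0] with n hn hpos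
  have hroot : ((n ^ 3 : ℕ) : ℝ) ^ ((1 : ℝ) / 3) = n := by
    simpa using pow_rpow_inv_natCast (n.cast_nonneg (α := ℝ)) three_ne_zero
  rwa [hroot, ← le_div_iff₀' (by positivity)]

theorem eventually_le_rpow_mul_optCoverageCost (hvmax : 0 < vmax) (humax : 0 < umax)
    (hQ : Bornology.IsBounded Q) (hQ0 : 0 < volume.real Q) :
    ∀ᶠ m : ℕ in atTop, (1 / 24) * (volume.real Q / (2 * vmax * umax)) ^ ((1 : ℝ) / 3) ≤
      (m : ℝ) ^ ((1 : ℝ) / 3) * optCoverageCost vmax umax Q m := by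
  obtain ⟨X, hX⟩ : ∃ X, X = (volume.real Q / (2 * vmax * umax)) ^ ((1 : ℝ) / 3) := ⟨_, rfl⟩
  have hXpos : 0 < X := by rw [hX]; positivity
  have hX3 : X ^ 3 = volume.real Q / (2 * vmax * umax) := by
    rw [hX, rpow_one_third_pow_three (by positivity)]
  have hroot : Tendsto (fun m : ℕ ↦ (m : ℝ) ^ ((1 : ℝ) / 3)) atTop atTop :=
    (tendsto_rpow_atTop (by norm_num)).comp tendsto_natCast_atTop_atTop
  rw [← hX]
  filter_upwards [eventually_ne_atTop 0,
    hroot.eventually_ge_atTop (umax * X / (12 * vmax))] with m hm hlarge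
  have hs : 0 < (m : ℝ) ^ ((1 : ℝ) / 3) := by positivity
  have hs3 := rpow_one_third_pow_three (m.cast_nonneg (α := ℝ))
  generalize (m : ℝ) ^ ((1 : ℝ) / 3) = s at *
  have hshort : umax * (X / (12 * s)) ≤ vmax := by
    rw [div_le_iff₀ (by positivity)] at hlarge
    rw [← mul_div_assoc, div_le_iff₀ (by positivity)]
    linarith
  have harea : m * (8 * π * (umax * vmax * (X / (12 * s)) ^ 3)) ≤ volume.real Q / 2 :=
    calc m * (8 * π * (umax * vmax * (X / (12 * s)) ^ 3)) = π / 432 * volume.real Q := by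
          rw [div_pow, mul_pow, hs3, hX3]
          field_simp
          norm_num
      _ ≤ 4 / 432 * volume.real Q := by gcongr; exact pi_le_four
      _ ≤ volume.real Q / 2 := by linarith
  calc 1 / 24 * X = s * (X / (12 * s) / 2) := by field_simp; norm_num
    _ ≤ s * optCoverageCost vmax umax Q m := by
        gcongr
        exact half_le_optCoverageCost hvmax humax hQ hQ0 hm (by positivity) hshort harea

theorem di_coverage_asymptotic_lower_bound_general (hvmax : 0 < vmax) (humax : 0 < umax)
    (hQ : Bornology.IsBounded Q) (hQ0 : 0 < volume.real Q) :
    (1 / 24) * (volume.real Q / (2 * vmax * umax)) ^ ((1 : ℝ) / 3) ≤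
      liminf (fun m : ℕ ↦ (m : ℝ) ^ ((1 : ℝ) / 3) * optCoverageCost vmax umax Q m) atTop := by
  obtain ⟨K, hK⟩ := exists_frequently_rpow_mul_optCoverageCost_le hvmax humax hQ
  exact le_liminf_of_le (.of_frequently_le hK)
    (eventually_le_rpow_mul_optCoverageCost hvmax humax hQ hQ0)

end Asymptotics

section Rectangle

theorem rectangle_eq_preimage_ofLp (a₀ b₀ a₁ b₁ : ℝ) :
    {q : Plane | q 0 ∈ Set.Icc a₀ b₀ ∧ q 1 ∈ Set.Icc a₁ b₁} =
      WithLp.ofLp ⁻¹' Set.Icc ![a₀, a₁] ![b₀, b₁] := by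
  ext q
  simp [Pi.le_def, Fin.forall_fin_two, and_and_and_comm]

theorem isBounded_rectangle (a₀ b₀ a₁ b₁ : ℝ) :
    Bornology.IsBounded {q : Plane | q 0 ∈ Set.Icc a₀ b₀ ∧ q 1 ∈ Set.Icc a₁ b₁} := by
  rw [rectangle_eq_preimage_ofLp]
  exact ((EuclideanSpace.equiv (Fin 2) ℝ).toHomeomorph.isCompact_preimage.2 isCompact_Icc).isBounded

theorem measureReal_rectangle {a₀ b₀ a₁ b₁ : ℝ} (h₀ : a₀ ≤ b₀) (h₁ : a₁ ≤ b₁) :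
    volume.real {q : Plane | q 0 ∈ Set.Icc a₀ b₀ ∧ q 1 ∈ Set.Icc a₁ b₁} =
      (b₀ - a₀) * (b₁ - a₁) := by
  rw [rectangle_eq_preimage_ofLp, (PiLp.volume_preserving_ofLp (Fin 2)).measureReal_preimage
    measurableSet_Icc.nullMeasurableSet, measureReal_def, Real.volume_Icc_pi]
  simp [Fin.prod_univ_two, h₀, h₁]

end Rectangle

/-- asymptotic lower bound on the optimal light-load coverage cost of `m`
DI robots in a square `Q` of area `A = a²`:
`liminf_{m→∞} m^{1/3} · T_opt^DI(m) ≥ (1/24) (A/(2 v_max u_max))^{1/3}`. -/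
theorem di_coverage_asymptotic_lower_bound
    (vmax umax a : ℝ) (hvmax : 0 < vmax) (humax : 0 < umax) (ha : 0 < a) (b₁ b₂ : ℝ) :
    let A : ℝ := a ^ 2
    let Q : Set Plane := {q | q 0 ∈ Set.Icc b₁ (b₁ + a) ∧ q 1 ∈ Set.Icc b₂ (b₂ + a)}
    let Topt : ℕ → ℝ := fun m =>
      sInf {c : ℝ | ∃ g : Fin m → Plane × Plane, (∀ i, ‖(g i).2‖ ≤ vmax) ∧
        c = (1 / A) * ∫ q in Q, ⨅ i, tauDI vmax umax (g i).1 (g i).2 q}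
    (1 / 24) * (A / (2 * vmax * umax)) ^ ((1 : ℝ) / 3) ≤
      Filter.liminf (fun m : ℕ => (m : ℝ) ^ ((1 : ℝ) / 3) * Topt m) Filter.atTop := by
  intro A Q Topt
  have hA : volume.real Q = A := by
    rw [measureReal_rectangle (by linarith) (by linarith)]
    ring
  have hTopt : Topt = optCoverageCost vmax umax Q := by
    ext m
    simp only [Topt, optCoverageCost, coverageCost, fleetTime, hA]
  rw [hTopt, ← hA]
  exact di_coverage_asymptotic_lower_bound_general hvmax humax (isBounded_rectangle ..)
    (hA ▸ pow_pos ha 2)
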